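/- arXiv:1602.01337 — 3 statements merged into one kernel-verified Lean document; each statement's English description precedes it below -/
import Mathlib

section
/- Let m = p^k where p > 2 is a prime number and k is a positive integer, and let n be a positive integer. Then the crown C_m ⊙ K̄_n is perfect edge-magic: for every integer j with 2mn + (5m+3)/2 ≤ j ≤ 4mn + (7m+3)/2 there exists an edge-magic labeling of C_m ⊙ K̄_n with valence j. -/
/-- An edge-magic labeling of a finite graph presented by an endpoint map
`ends : E → V × V` (loops and multiple edges allowed): the vertex labels `fv`
and edge labels `fe` together form a bijection onto `{1, …, |V| + |E|}` and
every edge `e` satisfies `fv (ends e).1 + fe e + fv (ends e).2 = k`.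
The constant `k` is the valence. -/
def IsEdgeMagic {V E : Type} [Fintype V] [Fintype E] (ends : E → V × V)
    (fv : V → ℕ) (fe : E → ℕ) (k : ℕ) : Prop :=
  Function.Injective (Sum.elim fv fe) ∧
  Set.range (Sum.elim fv fe) = Set.Icc 1 (Fintype.card V + Fintype.card E) ∧
  ∀ e : E, fv (ends e).1 + fe e + fv (ends e).2 = k

/-- A super edge-magic labeling: edge-magic, and moreover the vertex labels
are exactly `{1, …, |V|}`. -/
def IsSuperEdgeMagic {V E : Type} [Fintype V] [Fintype E] (ends : E → V × V)
    (fv : V → ℕ) (fe : E → ℕ) (k : ℕ) : Prop :=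
  IsEdgeMagic ends fv fe k ∧ Set.range fv = Set.Icc 1 (Fintype.card V)

/-- The cycle `C_m`: vertices `Fin m`, edge `i` joins `i` to `i+1 (mod m)`. -/
def cycleEnds (m : ℕ) : Fin m → Fin m × Fin m :=
  fun i => (i, ⟨(i.val + 1) % m, Nat.mod_lt _ i.pos⟩)

/-- The crown `C_m ⊙ K̄_n`: vertices are `Sum.inl i` (cycle vertices `v_i`) and
`Sum.inr (i, j)` (pendant vertices `v_i^j`); edges are the `m` cycle edges and
the `m * n` pendant edges. -/
def crownEnds (m n : ℕ) :
    (Fin m ⊕ Fin m × Fin n) → (Fin m ⊕ Fin m × Fin n) × (Fin m ⊕ Fin m × Fin n)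
  | Sum.inl i => (Sum.inl i, Sum.inl ⟨(i.val + 1) % m, Nat.mod_lt _ i.pos⟩)
  | Sum.inr p => (Sum.inl p.1, Sum.inr p)

/-- The graph `K_{1,n}^l`: the star `K_{1,n}` (center `none`, leaves `some j`)
with a loop (edge `none`) attached at the center. -/
def starLoopEnds (n : ℕ) : Option (Fin n) → Option (Fin n) × Option (Fin n)
  | none => (none, none)
  | some j => (none, some j)

/-!
Consider a graph with `p` vertices and `q` edges. Replacing every label `x` of an edge-magic
labeling of valence `k` by `p + q + 1 - x` gives valence `3 (p + q + 1) - k`. When `p = q`, doubling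
a super edge-magic labeling of valence `k` gives two more edge-magic labelings, with the vertices on
the odd or on the even numbers, of valences `2 k - 2 p - 2` and `2 k - 2 p - 1`. So a long enough
interval of super edge-magic valences produces every valence.

For the crown this interval comes from the cycle. Arrange the labels of the crown in an array with
`n + 1` rows and `m` columns, and fix a super edge-magic labeling of `C_m`. Put `v_i` in row `r i`
of the column of its cycle label, and the pendants of `v_i` in the free cells of the column of
`v_{i+1}`. The `n + 1` edges from `v_i` to `v_{i+1}` and to its pendants then reach every row of one
column, so their sums form an arithmetic progression of step `m`. For each `0 ≤ t ≤ m n`, taking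
for `r i` the quotient by `m` of `t` plus the cycle edge label (counted from `0`) makes these
progressions tile an interval.
-/

open Function Set

section Labeling

variable {V E : Type} [Fintype V] [Fintype E] {ends : E → V × V} {fv : V → ℕ} {fe : E → ℕ} {k : ℕ}

lemma isEdgeMagic_of_injective (hv : Injective fv) (he : Injective fe) (hve : ∀ v e, fv v ≠ fe e)
    (hfv : ∀ v, fv v ∈ Icc 1 (Fintype.card V + Fintype.card E))
    (hfe : ∀ e, fe e ∈ Icc 1 (Fintype.card V + Fintype.card E))
    (hk : ∀ e, fv (ends e).1 + fe e + fv (ends e).2 = k) : IsEdgeMagic ends fv fe k := by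
  have hinj : Injective (Sum.elim fv fe) := hv.sumElim he hve
  refine ⟨hinj, eq_of_subset_of_ncard_le ?_ ?_ (finite_Icc _ _), hk⟩
  · rintro _ ⟨v | e, rfl⟩
    exacts [hfv v, hfe e]
  · rw [← image_univ, ncard_image_of_injective _ hinj]
    simp

namespace IsEdgeMagic

lemma injective_vertex (hf : IsEdgeMagic ends fv fe k) : Injective fv :=
  hf.1.comp Sum.inl_injective

lemma injective_edge (hf : IsEdgeMagic ends fv fe k) : Injective fe :=
  hf.1.comp Sum.inr_injective

lemma vertex_ne_edge (hf : IsEdgeMagic ends fv fe k) (v : V) (e : E) : fv v ≠ fe e :=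
  fun h => Sum.inl_ne_inr (hf.1 h)

lemma vertex_mem_Icc (hf : IsEdgeMagic ends fv fe k) (v : V) :
    fv v ∈ Icc 1 (Fintype.card V + Fintype.card E) :=
  hf.2.1 ▸ mem_range_self (f := Sum.elim fv fe) (Sum.inl v)

lemma edge_mem_Icc (hf : IsEdgeMagic ends fv fe k) (e : E) :
    fe e ∈ Icc 1 (Fintype.card V + Fintype.card E) :=
  hf.2.1 ▸ mem_range_self (f := Sum.elim fv fe) (Sum.inr e)

lemma add_add_eq (hf : IsEdgeMagic ends fv fe k) (e : E) :
    fv (ends e).1 + fe e + fv (ends e).2 = k :=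
  hf.2.2 e

lemma complement (hf : IsEdgeMagic ends fv fe k) :
    IsEdgeMagic ends (fun v => Fintype.card V + Fintype.card E + 1 - fv v)
      (fun e => Fintype.card V + Fintype.card E + 1 - fe e)
      (3 * (Fintype.card V + Fintype.card E + 1) - k) := by
  have hv v := hf.vertex_mem_Icc v
  have he e := hf.edge_mem_Icc e
  simp only [mem_Icc] at hv he
  exact isEdgeMagic_of_injective
    (fun v w hvw => hf.injective_vertex (by grind only))
    (fun e e' hee' => hf.injective_edge (by grind only))
    (fun v e => by grind only [hf.vertex_ne_edge v e])
    (fun v => by grind only [= mem_Icc])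
    (fun e => by grind only [= mem_Icc])
    (fun e => by grind only [hf.add_add_eq e])

end IsEdgeMagic

namespace IsSuperEdgeMagic

lemma vertex_mem_Icc (hf : IsSuperEdgeMagic ends fv fe k) (v : V) :
    fv v ∈ Icc 1 (Fintype.card V) :=
  hf.2 ▸ mem_range_self v

lemma edge_mem_Ioc (hf : IsSuperEdgeMagic ends fv fe k) (e : E) :
    fe e ∈ Ioc (Fintype.card V) (Fintype.card V + Fintype.card E) := by
  obtain ⟨h1, h2⟩ := hf.1.edge_mem_Icc e
  refine ⟨lt_of_not_ge fun hle => ?_, h2⟩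
  obtain ⟨v, hv⟩ : fe e ∈ range fv := hf.2 ▸ ⟨h1, hle⟩
  exact hf.1.vertex_ne_edge v e hv

lemma odd_labeling (hf : IsSuperEdgeMagic ends fv fe k) (hEV : Fintype.card E ≤ Fintype.card V)
    (hVE : Fintype.card V ≤ Fintype.card E + 1) :
    IsEdgeMagic ends (fun v => 2 * fv v - 1) (fun e => 2 * (fe e - Fintype.card V))
      (2 * k - 2 * Fintype.card V - 2) := by
  have hv v := hf.vertex_mem_Icc v
  have he e := hf.edge_mem_Ioc e
  simp only [mem_Icc, mem_Ioc] at hv he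
  exact isEdgeMagic_of_injective
    (fun v w hvw => hf.1.injective_vertex (by grind only))
    (fun e e' hee' => hf.1.injective_edge (by grind only))
    (fun v e => by grind only)
    (fun v => by grind only [= mem_Icc])
    (fun e => by grind only [= mem_Icc])
    (fun e => by grind only [hf.1.add_add_eq e])

lemma even_labeling (hf : IsSuperEdgeMagic ends fv fe k) (hVE : Fintype.card V ≤ Fintype.card E)
    (hEV : Fintype.card E ≤ Fintype.card V + 1) :
    IsEdgeMagic ends (fun v => 2 * fv v) (fun e => 2 * (fe e - Fintype.card V) - 1)
      (2 * k - 2 * Fintype.card V - 1) := by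
  have hv v := hf.vertex_mem_Icc v
  have he e := hf.edge_mem_Ioc e
  simp only [mem_Icc, mem_Ioc] at hv he
  exact isEdgeMagic_of_injective
    (fun v w hvw => hf.1.injective_vertex (by grind only))
    (fun e e' hee' => hf.1.injective_edge (by grind only))
    (fun v e => by grind only)
    (fun v => by grind only [= mem_Icc])
    (fun e => by grind only [= mem_Icc])
    (fun e => by grind only [hf.1.add_add_eq e])

end IsSuperEdgeMagic

lemma exists_isSuperEdgeMagic_iff {p q : ℕ} (hp : Fintype.card V = p) (hq : Fintype.card E = q) :
    (∃ fv fe, IsSuperEdgeMagic ends fv fe k) ↔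
      ∃ (a : V → Fin p) (b : E → Fin q), Injective a ∧ Injective b ∧
        ∀ e, (a (ends e).1 + b e + a (ends e).2 : ℕ) + (p + 3) = k := by
  subst hp hq
  constructor
  · rintro ⟨fv, fe, hf⟩
    have hv v := hf.vertex_mem_Icc v
    have he e := hf.edge_mem_Ioc e
    simp only [mem_Icc, mem_Ioc] at hv he
    refine ⟨fun v => ⟨fv v - 1, by grind only⟩,
      fun e => ⟨fe e - Fintype.card V - 1, by grind only⟩,
      fun v w hvw => hf.1.injective_vertex ?_, fun e e' hee' => hf.1.injective_edge ?_,
      fun e => ?_⟩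
    · grind only
    · grind only
    · grind only [hf.1.add_add_eq e]
  · rintro ⟨a, b, ha, hb, hk⟩
    have hrange : range (fun v => (a v : ℕ) + 1) = Icc 1 (Fintype.card V) := by
      have ha' : Bijective a := (Fintype.bijective_iff_injective_and_card a).2 ⟨ha, by simp⟩
      ext x
      refine ⟨?_, fun ⟨hx, hx'⟩ => ?_⟩
      · rintro ⟨v, rfl⟩
        exact ⟨Nat.le_add_left _ _, (a v).2⟩
      · obtain ⟨v, hv⟩ := ha'.2 ⟨x - 1, by omega⟩
        exact ⟨v, by simp [hv, hx]⟩
    refine ⟨fun v => a v + 1, fun e => Fintype.card V + 1 + b e,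
      isEdgeMagic_of_injective (fun v w hvw => ha ?_) (fun e e' hee' => hb ?_) (fun v e => ?_)
        (fun v => ⟨by omega, by omega⟩) (fun e => ⟨by omega, by omega⟩) (fun e => ?_), hrange⟩
    · grind only
    · grind only
    · omega
    · grind only

lemma exists_isEdgeMagic_of_forall_isSuperEdgeMagic {N a b : ℕ} (hV : Fintype.card V = N)
    (hE : Fintype.card E = N) (hS : ∀ i, a ≤ i → i ≤ b → ∃ fv fe, IsSuperEdgeMagic ends fv fe i)
    (ha : 2 * a ≤ b + 2 * N + 3) (hb : 8 * N + 3 ≤ 3 * b) {j : ℕ} (haj : a ≤ j)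
    (hj : j ≤ 3 * (2 * N + 1) - a) : ∃ fv fe, IsEdgeMagic ends fv fe j := by
  rcases le_or_gt j b with hjb | hbj
  · obtain ⟨fv, fe, hf⟩ := hS j haj hjb
    exact ⟨fv, fe, hf.1⟩
  rcases le_or_gt (3 * (2 * N + 1)) (j + b) with hjb | hjb
  · obtain ⟨fv, fe, hf⟩ := hS (3 * (2 * N + 1) - j) (by omega) (by omega)
    exact ⟨_, _, by convert! hf.1.complement using 1; omega⟩
  · obtain ⟨i, hi | hi⟩ := Nat.even_or_odd' j <;>
      obtain ⟨fv, fe, hf⟩ := hS (i + N + 1) (by omega) (by omega)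
    · exact ⟨_, _, by convert! hf.odd_labeling (by omega) (by omega) using 1; omega⟩
    · exact ⟨_, _, by convert! hf.even_labeling (by omega) (by omega) using 1; omega⟩

end Labeling

lemma exists_injective_remainder {ι : Type*} {m n t : ℕ} {b : ι → Fin m} (hb : Injective b)
    (ht : t ≤ m * n) :
    ∃ (r : ι → Fin (n + 1)) (ρ : ι → Fin m), Injective ρ ∧
      ∀ i, (ρ i + m * r i : ℕ) = t + b i := by
  have hlt i : t + b i < (n + 1) * m := by linarith [(b i).2, add_one_mul n m]
  refine ⟨fun i => Fin.divNat ⟨t + b i, hlt i⟩, fun i => Fin.modNat ⟨t + b i, hlt i⟩,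
    fun i i' hi => hb (Fin.ext ?_), fun i => Nat.mod_add_div _ _⟩
  have hmod : t + b i ≡ t + b i' [MOD m] := congrArg Fin.val hi
  exact (hmod.add_left_cancel' t).eq_of_lt_of_lt (b i).2 (b i').2

section Crown

variable {m n : ℕ}

lemma finRotate_eq_mk_mod (i : Fin m) :
    finRotate m i = ⟨(i + 1) % m, Nat.mod_lt _ i.pos⟩ := by
  have := i.neZero
  ext
  simp [Fin.val_add]

lemma cycleEnds_apply (i : Fin m) : cycleEnds m i = (i, finRotate m i) := by
  rw [finRotate_eq_mk_mod, cycleEnds]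

lemma crownEnds_inl (i : Fin m) :
    crownEnds m n (Sum.inl i) = (Sum.inl i, Sum.inl (finRotate m i)) := by
  rw [finRotate_eq_mk_mod, crownEnds]

lemma exists_isSuperEdgeMagic_cycle (h : ℕ) :
    ∃ fv fe, IsSuperEdgeMagic (cycleEnds (2 * h + 1)) fv fe (5 * h + 4) := by
  rw [exists_isSuperEdgeMagic_iff (Fintype.card_fin _) (Fintype.card_fin _)]
  -- `half i` is `i` divided by `2` in `ZMod (2 * h + 1)`.
  let half (i : Fin (2 * h + 1)) : Fin (2 * h + 1) :=
    ⟨if Even (i : ℕ) then i / 2 else (i + 1) / 2 + h, by grind⟩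
  have half_injective : Injective half := fun i i' hi => by grind
  have half_add_half i : (half i + half (finRotate _ i) : ℕ) = h + finRotate _ i := by
    grind [coe_finRotate i]
  refine ⟨half, fun i => (finRotate _ i).rev, half_injective,
    Fin.rev_injective.comp (finRotate _).injective, fun i => ?_⟩
  simp only [cycleEnds_apply, Fin.val_rev]
  grind only [half_add_half i]

lemma card_crown : Fintype.card (Fin m ⊕ Fin m × Fin n) = m * n + m := by
  simp [add_comm]

/-- Arranges `ι ⊕ ι × Fin n` in an array with `n + 1` rows and one column for each index `i : ι`,
as pairs (row, column): `inl i` lies in row `r i` of column `i`, and the `inr (i, j)` fill the other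
rows of that column. The labels of a crown are read off from such arrays. -/
def crownCell {ι : Type*} (r : ι → Fin (n + 1)) : ι ⊕ ι × Fin n → Fin (n + 1) × ι
  | Sum.inl i => (r i, i)
  | Sum.inr (i, j) => ((r i).succAbove j, i)

lemma crownCell_injective {ι : Type*} (r : ι → Fin (n + 1)) : Injective (crownCell r) := by
  rintro (i | ⟨i, j⟩) (i' | ⟨i', j'⟩) h <;> simp only [crownCell, Prod.mk.injEq] at h <;>
    obtain ⟨hr, rfl⟩ := h
  · rfl
  · exact absurd hr.symm (Fin.succAbove_ne _ _)
  · exact absurd hr (Fin.succAbove_ne _ _)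
  · rw [Fin.succAbove_right_injective hr]

/-- The cells of the vertices of the crown, when `v_i` is put in row `r i`. The pendants of `v_i`
lie in the column of `v_{i+1}`, so that the far ends of the edges starting at `v_i` fill that
column. -/
def crownVertexCell (r : Fin m → Fin (n + 1)) : Fin m ⊕ Fin m × Fin n → Fin (n + 1) × Fin m :=
  crownCell r ∘ Sum.map id (Prod.map (finRotate m) id)

/-- The cells of the edges of the crown: the row of the far end, in the column of the cycle vertex
`v_i` from which the edge starts. -/
def crownEdgeCell (r : Fin m → Fin (n + 1)) : Fin m ⊕ Fin m × Fin n → Fin (n + 1) × Fin m :=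
  crownCell (r ∘ finRotate m)

lemma crownVertexCell_injective (r : Fin m → Fin (n + 1)) : Injective (crownVertexCell r) :=
  (crownCell_injective r).comp
    (injective_id.sumMap ((finRotate m).injective.prodMap injective_id))

lemma crownEdgeCell_injective (r : Fin m → Fin (n + 1)) : Injective (crownEdgeCell r) :=
  crownCell_injective _

lemma crownVertexCell_crownEnds_fst (r : Fin m → Fin (n + 1)) (e : Fin m ⊕ Fin m × Fin n) :
    crownVertexCell r (crownEnds m n e).1 = (r (crownEdgeCell r e).2, (crownEdgeCell r e).2) := by
  rcases e with i | p <;> rfl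

lemma crownVertexCell_crownEnds_snd (r : Fin m → Fin (n + 1)) (e : Fin m ⊕ Fin m × Fin n) :
    crownVertexCell r (crownEnds m n e).2 =
      ((crownEdgeCell r e).1, finRotate m (crownEdgeCell r e).2) := by
  rcases e with i | p
  · rw [crownEnds_inl]
    rfl
  · rfl

lemma IsSuperEdgeMagic.exists_crown {fv fe : Fin m → ℕ} {k t : ℕ}
    (hf : IsSuperEdgeMagic (cycleEnds m) fv fe k) (ht : t ≤ m * n) :
    ∃ fv fe, IsSuperEdgeMagic (crownEnds m n) fv fe (k + 2 * m * n + t) := by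
  obtain ⟨a, b, ha, hb, hab⟩ :=
    (exists_isSuperEdgeMagic_iff (Fintype.card_fin m) (Fintype.card_fin m)).1 ⟨fv, fe, hf⟩
  obtain ⟨r, ρ, hρ, hrρ⟩ := exists_injective_remainder hb ht
  have hcard : Fintype.card (Fin m ⊕ Fin m × Fin n) = (n + 1) * m := card_crown.trans (by ring)
  rw [exists_isSuperEdgeMagic_iff hcard hcard]
  refine ⟨finProdFinEquiv ∘ Prod.map id a ∘ crownVertexCell r,
    finProdFinEquiv ∘ Prod.map Fin.rev ρ ∘ crownEdgeCell r,
    finProdFinEquiv.injective.comp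
      ((injective_id.prodMap ha).comp (crownVertexCell_injective r)),
    finProdFinEquiv.injective.comp
      ((Fin.rev_injective.prodMap hρ).comp (crownEdgeCell_injective r)), fun e => ?_⟩
  simp only [comp_apply, crownVertexCell_crownEnds_fst, crownVertexCell_crownEnds_snd]
  obtain ⟨row, i⟩ := crownEdgeCell r e
  have habi := hab i
  have hrow : m * (n - row) + m * row = m * n := by
    rw [← mul_add, Nat.sub_add_cancel row.is_le]
  simp only [cycleEnds_apply] at habi
  simp only [Prod.map_apply, id_eq, finProdFinEquiv_apply_val, Fin.val_rev, Nat.add_sub_add_right]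
  linarith [hrρ i]

lemma exists_isSuperEdgeMagic_crown {h i : ℕ} (hi : 2 * (2 * h + 1) * n + 5 * h + 4 ≤ i)
    (hi' : i ≤ 3 * (2 * h + 1) * n + 5 * h + 4) :
    ∃ fv fe, IsSuperEdgeMagic (crownEnds (2 * h + 1) n) fv fe i := by
  obtain ⟨fv, fe, hf⟩ := exists_isSuperEdgeMagic_cycle h
  obtain ⟨t, rfl⟩ := Nat.exists_eq_add_of_le hi
  rw [show 2 * (2 * h + 1) * n + 5 * h + 4 + t = 5 * h + 4 + 2 * (2 * h + 1) * n + t by ring]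
  exact hf.exists_crown (by linarith)

end Crown

theorem crown_primePower_perfectEdgeMagic_general (n m : ℕ) (hm : Odd m) (hn : 1 ≤ n) :
    ∀ j : ℕ, 2 * m * n + (5 * m + 3) / 2 ≤ j → j ≤ 4 * m * n + (7 * m + 3) / 2 →
      ∃ fv fe, IsEdgeMagic (crownEnds m n) fv fe j := by
  intro j hj hj'
  obtain ⟨h, rfl⟩ := hm
  have hle : 2 * h + 1 ≤ (2 * h + 1) * n := Nat.le_mul_of_pos_right _ hn
  have hS (i : ℕ) := exists_isSuperEdgeMagic_crown (n := n) (h := h) (i := i)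
  simp only [mul_assoc _ (2 * h + 1) n] at hj hj' hS
  exact exists_isEdgeMagic_of_forall_isSuperEdgeMagic card_crown card_crown hS (by omega)
    (by omega) (by omega) (by omega)

/-- for m = p^k an odd prime power and n ≥ 1, the crown
C_m ⊙ K̄_n is perfect edge-magic: every integer j with
2mn + (5m+3)/2 ≤ j ≤ 4mn + (7m+3)/2 is the valence of an edge-magic
labeling of C_m ⊙ K̄_n. -/
theorem crown_primePower_perfectEdgeMagic (p k n m : ℕ) (hp : p.Prime)
    (hp2 : 2 < p) (hk : 1 ≤ k) (hn : 1 ≤ n) (hm : m = p ^ k) :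
    ∀ j : ℕ, 2 * m * n + (5 * m + 3) / 2 ≤ j → j ≤ 4 * m * n + (7 * m + 3) / 2 →
      ∃ fv fe, IsEdgeMagic (crownEnds m n) fv fe j :=
  crown_primePower_perfectEdgeMagic_general n m
    (hm ▸ (hp.odd_of_ne_two hp2.ne').pow) hn
end

section
/- Let G be a graph with p vertices and q edges where p = q, and suppose G admits a super edge-magic labeling f with valence val(f). Then G admits an edge-magic labeling with valence 2·val(f) − 2p − 2 and an edge-magic labeling with valence 2·val(f) − 2p − 1 (the odd labeling o(f), defined by o(f)(x) = 2f(x) − 1 on vertices, and the even labeling e(f), defined by e(f)(x) = 2f(x) on vertices, with the edge labels determined by the respective valences). -/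
/-!
Write `p` and `q` for the numbers of vertices and edges. In a super edge-magic labeling the edge
labels are exactly `p + 1, …, p + q`, so lowering them by `p` numbers the edges by `1, …, q`.
Doubling both numberings and lowering one of them by `1` sends one to odd and the other to even
labels, and these interleave to `1, …, p + q` as soon as the odd ones are as many as the even ones,
or one more. At every edge the magic sum is doubled and changed by a constant.
-/

/-- `IsNumbering f n` says that `f` numbers its domain bijectively by `1, …, n`; this is the
condition that a (vertex, edge or total) labeling uses each available label exactly once. -/
def IsNumbering {α : Type*} (f : α → ℕ) (n : ℕ) : Prop :=
  Function.Injective f ∧ Set.range f = Set.Icc 1 n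

namespace IsNumbering

variable {α β : Type*} {f : α → ℕ} {g : β → ℕ} {m n : ℕ}

theorem mem_Icc (hf : IsNumbering f n) (x : α) : f x ∈ Set.Icc 1 n :=
  hf.2 ▸ Set.mem_range_self x

theorem exists_eq (hf : IsNumbering f n) {i : ℕ} (hi : i ∈ Set.Icc 1 n) : ∃ x, f x = i := by
  rwa [← hf.2] at hi

theorem comp_equiv (hf : IsNumbering f n) (σ : β ≃ α) : IsNumbering (f ∘ σ) n :=
  ⟨hf.1.comp σ.injective, (σ.surjective.range_comp f).trans hf.2⟩

theorem sumElim_swap (hfg : IsNumbering (Sum.elim f g) n) : IsNumbering (Sum.elim g f) n := by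
  have hswap := hfg.comp_equiv (Equiv.sumComm β α)
  rwa [Equiv.sumComm_apply, Sum.elim_swap] at hswap

theorem lt_of_sumElim (hf : IsNumbering f m) (hfg : IsNumbering (Sum.elim f g) n) (y : β) :
    m < g y := by
  by_contra! hle
  obtain ⟨x, hx⟩ := hf.exists_eq ⟨(hfg.mem_Icc (Sum.inr y)).1, hle⟩
  exact Sum.inl_ne_inr (hfg.1 hx)

theorem sub_of_sumElim (hf : IsNumbering f m) (hfg : IsNumbering (Sum.elim f g) (m + n)) :
    IsNumbering (fun y => g y - m) n := by
  have hlt := hf.lt_of_sumElim hfg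
  refine ⟨fun y z hyz => Sum.inr_injective (hfg.1 ?_), Set.Subset.antisymm ?_ ?_⟩
  · have := hlt y
    have := hlt z
    simp only [Sum.elim_inr]
    lia
  · rintro _ ⟨y, rfl⟩
    have hle : g y ≤ m + n := (hfg.mem_Icc (Sum.inr y)).2
    exact ⟨Nat.sub_pos_of_lt (hlt y), Nat.sub_le_of_le_add (by lia)⟩
  · rintro i ⟨hi, hin⟩
    obtain ⟨x | y, hxy⟩ := hfg.exists_eq (i := m + i) ⟨by lia, by lia⟩
    · have hle : f x ≤ m := (hf.mem_Icc x).2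
      simp only [Sum.elim_inl] at hxy
      lia
    · exact ⟨y, Nat.sub_eq_of_eq_add' hxy⟩

theorem sumElim_odd_even (hf : IsNumbering f m) (hg : IsNumbering g n)
    (hnm : n ≤ m) (hmn : m ≤ n + 1) :
    IsNumbering (Sum.elim (fun x => 2 * f x - 1) (fun y => 2 * g y)) (m + n) := by
  have hpos (x : α) : 1 ≤ f x := (hf.mem_Icc x).1
  constructor
  · refine Function.Injective.sumElim (fun x y hxy => hf.1 ?_) (fun x y hxy => hg.1 ?_) ?_
    · have := hpos x
      have := hpos y
      lia
    · lia
    · intro x y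
      have := hpos x
      lia
  · refine Set.Subset.antisymm ?_ ?_
    · rintro _ ⟨x | y, rfl⟩
      · have ⟨hx, hxm⟩ := hf.mem_Icc x
        simp only [Sum.elim_inl, Set.mem_Icc]
        lia
      · have ⟨hy, hyn⟩ := hg.mem_Icc y
        simp only [Sum.elim_inr, Set.mem_Icc]
        lia
    · rintro i ⟨hi, himn⟩
      obtain ⟨j, rfl | rfl⟩ := Nat.even_or_odd' i
      · obtain ⟨y, rfl⟩ := hg.exists_eq (i := j) ⟨by lia, by lia⟩
        exact ⟨Sum.inr y, rfl⟩
      · obtain ⟨x, hx⟩ := hf.exists_eq (i := j + 1) ⟨by lia, by lia⟩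
        exact ⟨Sum.inl x, by simp only [Sum.elim_inl]; lia⟩

end IsNumbering

section EdgeMagic

variable {V E : Type} [Fintype V] [Fintype E] {ends : E → V × V} {fv : V → ℕ} {fe : E → ℕ} {k : ℕ}

theorem IsEdgeMagic.isNumbering_sumElim (hem : IsEdgeMagic ends fv fe k) :
    IsNumbering (Sum.elim fv fe) (Fintype.card V + Fintype.card E) :=
  ⟨hem.1, hem.2.1⟩

namespace IsSuperEdgeMagic

theorem isNumbering_vertex (hsem : IsSuperEdgeMagic ends fv fe k) :
    IsNumbering fv (Fintype.card V) :=
  ⟨hsem.1.1.comp Sum.inl_injective, hsem.2⟩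

theorem card_lt_edge (hsem : IsSuperEdgeMagic ends fv fe k) (e : E) : Fintype.card V < fe e :=
  hsem.isNumbering_vertex.lt_of_sumElim hsem.1.isNumbering_sumElim e

theorem isNumbering_edge_sub (hsem : IsSuperEdgeMagic ends fv fe k) :
    IsNumbering (fun e => fe e - Fintype.card V) (Fintype.card E) :=
  hsem.isNumbering_vertex.sub_of_sumElim hsem.1.isNumbering_sumElim

theorem isEdgeMagic_odd (hsem : IsSuperEdgeMagic ends fv fe k)
    (hEV : Fintype.card E ≤ Fintype.card V) (hVE : Fintype.card V ≤ Fintype.card E + 1) :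
    IsEdgeMagic ends (fun x => 2 * fv x - 1) (fun e => 2 * (fe e - Fintype.card V))
      (2 * k - 2 * Fintype.card V - 2) := by
  obtain ⟨hinj, hrange⟩ :=
    hsem.isNumbering_vertex.sumElim_odd_even hsem.isNumbering_edge_sub hEV hVE
  refine ⟨hinj, hrange, fun e => ?_⟩
  have hvalence := hsem.1.2.2 e
  have hedge := hsem.card_lt_edge e
  have hfst := (hsem.isNumbering_vertex.mem_Icc (ends e).1).1
  have hsnd := (hsem.isNumbering_vertex.mem_Icc (ends e).2).1
  lia

theorem isEdgeMagic_even (hsem : IsSuperEdgeMagic ends fv fe k)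
    (hVE : Fintype.card V ≤ Fintype.card E) (hEV : Fintype.card E ≤ Fintype.card V + 1) :
    IsEdgeMagic ends (fun x => 2 * fv x) (fun e => 2 * (fe e - Fintype.card V) - 1)
      (2 * k - 2 * Fintype.card V - 1) := by
  obtain ⟨hinj, hrange⟩ :=
    (hsem.isNumbering_edge_sub.sumElim_odd_even hsem.isNumbering_vertex hVE hEV).sumElim_swap
  refine ⟨hinj, by rw [hrange, Nat.add_comm], fun e => ?_⟩
  have hvalence := hsem.1.2.2 e
  have hedge := hsem.card_lt_edge e
  lia

end IsSuperEdgeMagic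

end EdgeMagic

theorem odd_even_labelings_general {V E : Type} [Fintype V] [Fintype E]
    (ends : E → V × V) (fv : V → ℕ) (fe : E → ℕ) (k : ℕ)
    (hsem : IsSuperEdgeMagic ends fv fe k) :
    (Fintype.card E ≤ Fintype.card V → Fintype.card V ≤ Fintype.card E + 1 →
      ∃ fe', IsEdgeMagic ends (fun x => 2 * fv x - 1) fe'
        (2 * k - 2 * Fintype.card V - 2)) ∧
    (Fintype.card V ≤ Fintype.card E → Fintype.card E ≤ Fintype.card V + 1 →
      ∃ fe', IsEdgeMagic ends (fun x => 2 * fv x) fe'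
        (2 * k - 2 * Fintype.card V - 1)) :=
  ⟨fun hEV hVE => ⟨_, hsem.isEdgeMagic_odd hEV hVE⟩,
    fun hVE hEV => ⟨_, hsem.isEdgeMagic_even hVE hEV⟩⟩

/-- for a graph with p = q and a super edge-magic labeling
with valence k, the odd labeling x ↦ 2·f(x) - 1 and the even labeling
x ↦ 2·f(x) on vertices extend to edge-magic labelings with valences
2k - 2p - 2 and 2k - 2p - 1 respectively. -/
theorem odd_even_labelings {V E : Type} [Fintype V] [Fintype E]
    (ends : E → V × V) (h : Fintype.card V = Fintype.card E)
    (fv : V → ℕ) (fe : E → ℕ) (k : ℕ)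
    (hsem : IsSuperEdgeMagic ends fv fe k) :
    (∃ fe', IsEdgeMagic ends (fun x => 2 * fv x - 1) fe'
      (2 * k - 2 * Fintype.card V - 2)) ∧
    (∃ fe', IsEdgeMagic ends (fun x => 2 * fv x) fe'
      (2 * k - 2 * Fintype.card V - 1)) := by
  obtain ⟨hodd, heven⟩ := odd_even_labelings_general ends fv fe k hsem
  exact ⟨hodd h.ge (by lia), heven h.le (by lia)⟩
end

section
/- Let m ≥ 3 and n ≥ 1 be integers. Then every edge-magic labeling of the crown C_m ⊙ K̄_n has valence k satisfying (3+5m)/2 + 2mn ≤ k ≤ (3+7m)/2 + 4mn (as inequalities of rational numbers); that is, the magic interval of C_m ⊙ K̄_n is J = [⌈(3+5m)/2⌉ + 2mn, ⌊(3+7m)/2⌋ + 4mn]. -/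
/-!
Summing the magic condition over the edges counts every vertex label with its degree. Suppose that
`|E| = |V|` and that every vertex has degree `1`, except for `m` hubs of degree `n + 2`. With
`N = |V| + |E| = 2 * m * (n + 1)`, the labels contribute `N * (N + 1) / 2` in total and the hubs an
excess of `n + 1` times their label sum `C`, so that `m * k = m * (N + 1) + C`. Being a sum of `m`
distinct labels, `C` is at least `1 + ⋯ + m` and at most `(N - m + 1) + ⋯ + N`.
-/

open scoped Finset

section DistinctIntegers

variable {ι : Type*} {s : Finset ι} {f : ι → ℤ} {c : ℤ}

theorem card_mul_le_two_mul_sum (hf : Set.InjOn f s) (hc : ∀ i ∈ s, c ≤ f i) :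
    (#s : ℤ) * (2 * c + #s - 1) ≤ 2 * ∑ i ∈ s, f i := by
  have gauss (n : ℕ) : 2 * ∑ j ∈ Finset.range n, (c + j) = n * (2 * c + n - 1) := by
    induction n with
    | zero => simp
    | succ n ih => rw [Finset.sum_range_succ, mul_add, ih]; push_cast; ring
  have h := Finset.sum_range_le_sum (s := s.image f) (c := c) (by simpa using hc)
  rw [Finset.card_image_of_injOn hf, Finset.sum_image hf] at h
  linarith [gauss #s]

theorem two_mul_sum_le_card_mul (hf : Set.InjOn f s) (hc : ∀ i ∈ s, f i ≤ c) :
    2 * ∑ i ∈ s, f i ≤ #s * (2 * c - #s + 1) := by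
  have h := card_mul_le_two_mul_sum (f := fun i => -f i) (c := -c)
    (neg_injective.comp_injOn hf) (fun i hi => neg_le_neg (hc i hi))
  rw [Finset.sum_neg_distrib] at h
  linarith

end DistinctIntegers

section Degree

variable {V E : Type*} [Fintype V] [Fintype E] [DecidableEq V]

/-- The degree of `v` in the multigraph with endpoint map `ends`; a loop at `v` counts twice. -/
def endsDegree (ends : E → V × V) (v : V) : ℕ :=
  #{e | (ends e).1 = v} + #{e | (ends e).2 = v}

variable {M : Type*} [AddCommMonoid M] {ends : E → V × V}

theorem sum_endsDegree_nsmul (ends : E → V × V) (g : V → M) :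
    ∑ v, endsDegree ends v • g v = ∑ e, (g (ends e).1 + g (ends e).2) := by
  simp only [endsDegree, add_nsmul, Finset.sum_add_distrib]
  simp only [← Finset.sum_const, Finset.sum_fiberwise']

variable {S : Finset V} {d : ℕ}

theorem sum_endsDegree_nsmul_of_hubs (hS : ∀ v ∈ S, endsDegree ends v = d + 1)
    (hS' : ∀ v ∉ S, endsDegree ends v = 1) (g : V → M) :
    ∑ v, endsDegree ends v • g v = ∑ v, g v + d • ∑ v ∈ S, g v := by
  have hdeg (v : V) : endsDegree ends v • g v = g v + if v ∈ S then d • g v else 0 := by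
    split_ifs with hv
    · rw [hS v hv, succ_nsmul']
    · rw [hS' v hv, one_nsmul, add_zero]
  simp only [hdeg, Finset.sum_add_distrib, Finset.sum_ite_mem, Finset.univ_inter, Finset.smul_sum]

theorem card_eq_card_hubs_mul (hE : Fintype.card E = Fintype.card V)
    (hS : ∀ v ∈ S, endsDegree ends v = d + 1) (hS' : ∀ v ∉ S, endsDegree ends v = 1) :
    Fintype.card V = #S * d := by
  have handshake := sum_endsDegree_nsmul ends fun _ => 1
  rw [sum_endsDegree_nsmul_of_hubs hS hS'] at handshake
  simp only [Finset.sum_const, Finset.card_univ, smul_eq_mul, mul_one, hE] at handshake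
  linarith

end Degree

namespace IsEdgeMagic

variable {V E : Type} [Fintype V] [Fintype E] {ends : E → V × V}
  {fv : V → ℕ} {fe : E → ℕ} {k : ℕ}

theorem label_mem_Icc (h : IsEdgeMagic ends fv fe k) (x : V ⊕ E) :
    Sum.elim fv fe x ∈ Set.Icc 1 (Fintype.card V + Fintype.card E) :=
  h.2.1 ▸ Set.mem_range_self x

theorem vertexLabel_mem_Icc (h : IsEdgeMagic ends fv fe k) (v : V) :
    fv v ∈ Set.Icc 1 (Fintype.card V + Fintype.card E) :=
  h.label_mem_Icc (Sum.inl v)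

theorem vertexLabel_injective (h : IsEdgeMagic ends fv fe k) : Function.Injective fv :=
  h.1.comp Sum.inl_injective

theorem two_mul_sum_labels (h : IsEdgeMagic ends fv fe k) :
    2 * (∑ v, fv v + ∑ e, fe e) = (Fintype.card V + Fintype.card E) *
      (Fintype.card V + Fintype.card E + 1) := by
  have hinj : Set.InjOn (fun x => ((Sum.elim fv fe x : ℕ) : ℤ)) (Finset.univ : Finset (V ⊕ E)) :=
    (Nat.cast_injective.comp h.1).injOn
  have lower := card_mul_le_two_mul_sum (c := 1) hinj
    fun x _ => by exact_mod_cast (h.label_mem_Icc x).1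
  have upper := two_mul_sum_le_card_mul (c := ↑(Fintype.card V + Fintype.card E)) hinj
    fun x _ => by exact_mod_cast (h.label_mem_Icc x).2
  simp only [Finset.card_univ, Fintype.card_sum, Fintype.sum_sum_type, Sum.elim_inl,
    Sum.elim_inr] at lower upper
  zify
  push_cast at lower upper
  linarith

variable [DecidableEq V]

theorem card_mul_valence (h : IsEdgeMagic ends fv fe k) :
    Fintype.card E * k = ∑ v, endsDegree ends v * fv v + ∑ e, fe e := by
  calc Fintype.card E * k
      = ∑ e, (fv (ends e).1 + fe e + fv (ends e).2) := by simp [h.2.2]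
    _ = ∑ e, (fv (ends e).1 + fv (ends e).2) + ∑ e, fe e := by
      rw [← Finset.sum_add_distrib]
      exact Finset.sum_congr rfl fun e _ => add_right_comm ..
    _ = ∑ v, endsDegree ends v * fv v + ∑ e, fe e := by
      rw [← sum_endsDegree_nsmul]
      simp only [smul_eq_mul]

variable {S : Finset V} {n : ℕ}

theorem card_hubs_mul_valence (h : IsEdgeMagic ends fv fe k)
    (hE : Fintype.card E = Fintype.card V) (hS : ∀ v ∈ S, endsDegree ends v = n + 2)
    (hS' : ∀ v ∉ S, endsDegree ends v = 1) :
    #S * k = #S * (Fintype.card V + Fintype.card E + 1) + ∑ v ∈ S, fv v := by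
  have hV := card_eq_card_hubs_mul hE hS hS'
  have valence := h.card_mul_valence
  have total := h.two_mul_sum_labels
  have hdeg := sum_endsDegree_nsmul_of_hubs hS hS' fv
  simp only [smul_eq_mul] at hdeg
  rw [hE, hV] at total valence ⊢
  rw [hdeg] at valence
  refine Nat.eq_of_mul_eq_mul_left n.succ_pos ?_
  linarith

end IsEdgeMagic

section Crown

variable {m n : ℕ}

theorem finRotate_apply_eq_mk (i : Fin m) :
    finRotate m i = ⟨(i.val + 1) % m, Nat.mod_lt _ i.pos⟩ := by
  have := i.neZero
  ext
  simp [finRotate_apply, Fin.val_add]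

theorem crownEnds_snd (e : Fin m ⊕ Fin m × Fin n) :
    (crownEnds m n e).2 = Equiv.sumCongr (finRotate m) (Equiv.refl _) e := by
  rcases e with i | p
  · simp only [crownEnds, Equiv.sumCongr_apply, Sum.map_inl, finRotate_apply_eq_mk]
  · rfl

theorem card_filter_crownEnds_snd_eq (v : Fin m ⊕ Fin m × Fin n) :
    #{e | (crownEnds m n e).2 = v} = 1 := by
  simp only [crownEnds_snd, ← Equiv.eq_symm_apply, Finset.filter_eq', Finset.mem_univ, if_true,
    Finset.card_singleton]

theorem endsDegree_crownEnds_inl (i : Fin m) :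
    endsDegree (crownEnds m n) (Sum.inl i) = n + 2 := by
  have hfst : #{e | (crownEnds m n e).1 = Sum.inl i} = n + 1 := by
    rw [Finset.card_filter, Fintype.sum_sum_type, Fintype.sum_prod_type]
    simp [crownEnds, add_comm]
  rw [endsDegree, hfst, card_filter_crownEnds_snd_eq]

theorem endsDegree_crownEnds_inr (p : Fin m × Fin n) :
    endsDegree (crownEnds m n) (Sum.inr p) = 1 := by
  have hfst : #{e | (crownEnds m n e).1 = Sum.inr p} = 0 := by
    rw [Finset.card_filter, Fintype.sum_sum_type]
    simp [crownEnds]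
  rw [endsDegree, hfst, card_filter_crownEnds_snd_eq]

end Crown

theorem crown_magicInterval_general {V E : Type} [Fintype V] [Fintype E] [DecidableEq V]
    {ends : E → V × V} {fv : V → ℕ} {fe : E → ℕ} {k n : ℕ} {S : Finset V}
    (hE : Fintype.card E = Fintype.card V) (hne : S.Nonempty)
    (hS : ∀ v ∈ S, endsDegree ends v = n + 2) (hS' : ∀ v ∉ S, endsDegree ends v = 1)
    (h : IsEdgeMagic ends fv fe k) :
    (3 + 5 * (#S : ℚ)) / 2 + 2 * #S * n ≤ k ∧
      (k : ℚ) ≤ (3 + 7 * (#S : ℚ)) / 2 + 4 * #S * n := by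
  have hinj : Set.InjOn (fun v => (fv v : ℤ)) S :=
    (Nat.cast_injective.comp h.vertexLabel_injective).injOn
  have lower := card_mul_le_two_mul_sum (c := 1) hinj
    fun v _ => by exact_mod_cast (h.vertexLabel_mem_Icc v).1
  have upper := two_mul_sum_le_card_mul (c := ↑(Fintype.card V + Fintype.card E)) hinj
    fun v _ => by exact_mod_cast (h.vertexLabel_mem_Icc v).2
  have valence := h.card_hubs_mul_valence hE hS hS'
  rw [hE, card_eq_card_hubs_mul hE hS hS'] at upper valence
  have hpos : (0 : ℚ) < #S := by exact_mod_cast hne.card_pos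
  qify at lower upper valence
  constructor <;> refine le_of_mul_le_mul_left ?_ hpos <;> linarith

/-- for m ≥ 3 and n ≥ 1, every edge-magic labeling of the
crown C_m ⊙ K̄_n has valence k with
(3+5m)/2 + 2mn ≤ k ≤ (3+7m)/2 + 4mn (inequalities of rational numbers). -/
theorem crown_magicInterval (m n : ℕ) (hm : 3 ≤ m) (hn : 1 ≤ n) :
    ∀ fv fe k, IsEdgeMagic (crownEnds m n) fv fe k →
      (3 + 5 * (m : ℚ)) / 2 + 2 * m * n ≤ (k : ℚ) ∧
      (k : ℚ) ≤ (3 + 7 * (m : ℚ)) / 2 + 4 * m * n := by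
  intro fv fe k h
  have : NeZero m := ⟨by lia⟩
  simpa using crown_magicInterval_general (S := Finset.univ.map .inl) rfl (by simp)
    (by simp [endsDegree_crownEnds_inl]) (by simp [endsDegree_crownEnds_inr]) h
end
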